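/- arXiv:2304.10126 — 5 statements merged into one kernel-verified Lean document; each statement's English description precedes it below -/
import Mathlib

section
/- Let P ∈ R^{n×n} be symmetric and X ∈ R^{n×d} with singular value decomposition X = U_k Σ_k V_k^T + U_e Σ_e V_e^T, where U_k ∈ R^{n×k}, U_e ∈ R^{n×e}, V_k ∈ R^{d×k}, V_e ∈ R^{d×e} have orthonormal columns with U_k^T U_e = 0 and V_k^T V_e = 0, and Σ_k ∈ R^{k×k} is diagonal and invertible, Σ_e ∈ R^{e×e} is diagonal. Set E = P − X X^T. If W ∈ R^{d×k} satisfies V_k^T W = Σ_k^{-2} and V_e^T W = 0, then with H = P X W: H H^T − P = E U_k U_k^T + U_k U_k^T E + E U_k Σ_k^{-2} U_k^T E − U_e Σ_e² U_e^T − E. -/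
open Matrix

/-!
As `X W = Uₖ Σₖ⁻¹`, the embedding satisfies `H Hᵀ = (P Uₖ) Σₖ⁻² (P Uₖ)ᵀ`. Orthogonality of the
singular vectors gives `P Uₖ = (E + X Xᵀ) Uₖ = E Uₖ + Uₖ Σₖ²`, so `H Hᵀ` is a square in the weight
`Σₖ⁻²`; expanding it produces the cross terms `E Uₖ Uₖᵀ` and `Uₖ Uₖᵀ E`, the quadratic term, and
`Uₖ Σₖ² Uₖᵀ`, which cancels against the leading part of `P`. For a general invertible block `Σₖ`
over a star ring the weight `Σₖ⁻²` splits into two: `(Σₖᴴ Σₖ)⁻¹` in the condition on `W`, and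
`(Σₖ Σₖᴴ)⁻¹` in the expansion.
-/

lemma orthonormal_sum_mul_conjTranspose_self
    {R n d k e : Type*} [Semiring R] [StarRing R]
    [Fintype d] [Fintype k] [Fintype e] [DecidableEq k] [DecidableEq e]
    (A : Matrix n k R) (B : Matrix n e R) {V : Matrix d k R} {V' : Matrix d e R}
    (hV : Vᴴ * V = 1) (hV' : V'ᴴ * V' = 1) (hVV' : Vᴴ * V' = 0) :
    (A * Vᴴ + B * V'ᴴ) * (A * Vᴴ + B * V'ᴴ)ᴴ = A * Aᴴ + B * Bᴴ := by
  have hV'V : V'ᴴ * V = 0 := by simpa using congrArg conjTranspose hVV'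
  have hV_mul : Vᴴ * (A * Vᴴ + B * V'ᴴ)ᴴ = Aᴴ := by
    simp [Matrix.mul_add, ← Matrix.mul_assoc, hV, hVV']
  have hV'_mul : V'ᴴ * (A * Vᴴ + B * V'ᴴ)ᴴ = Bᴴ := by
    simp [Matrix.mul_add, ← Matrix.mul_assoc, hV', hV'V]
  rw [Matrix.add_mul, Matrix.mul_assoc, hV_mul, Matrix.mul_assoc, hV'_mul]

lemma add_mul_mul_eq_of_right_eq_zero
    {R m n d k e : Type*} [Semiring R] [Fintype d] [Fintype k] [Fintype e]
    (A : Matrix n k R) (B : Matrix n e R) {C : Matrix k d R} {D : Matrix e d R}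
    {W : Matrix d m R} {J : Matrix k m R} (hCW : C * W = J) (hDW : D * W = 0) :
    (A * C + B * D) * W = A * J := by
  rw [Matrix.add_mul, Matrix.mul_assoc, hCW, Matrix.mul_assoc, hDW, Matrix.mul_zero, add_zero]

section ConjTranspose

variable {R n d k e : Type*} [CommRing R] [StarRing R]

section SquareFactor

variable [Fintype k] [DecidableEq k]

lemma mul_inv_mul_conjTranspose_self {S : Matrix k k R} (hS : IsUnit S.det) :
    S * (Sᴴ * S)⁻¹ * (S * (Sᴴ * S)⁻¹)ᴴ = (S * Sᴴ)⁻¹ := by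
  have hfactor : S * (Sᴴ * S)⁻¹ = Sᴴ⁻¹ := by
    rw [Matrix.mul_inv_rev, Matrix.mul_nonsing_inv_cancel_left _ _ hS]
  rw [hfactor, ← conjTranspose_nonsing_inv, conjTranspose_conjTranspose, Matrix.mul_inv_rev,
    conjTranspose_nonsing_inv]

lemma add_mul_inv_mul_conjTranspose_add (A U : Matrix n k R) {G : Matrix k k R}
    (hG : G.IsHermitian) (hGdet : IsUnit G.det) :
    (A + U * G) * G⁻¹ * (A + U * G)ᴴ = A * G⁻¹ * Aᴴ + A * Uᴴ + U * Aᴴ + U * G * Uᴴ := by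
  have hleft : (A + U * G) * G⁻¹ = A * G⁻¹ + U := by
    rw [Matrix.add_mul, Matrix.mul_nonsing_inv_cancel_right _ _ hGdet]
  have hright : (A + U * G)ᴴ = Aᴴ + G * Uᴴ := by
    rw [conjTranspose_add, conjTranspose_mul, hG.eq]
  have hcross : A * G⁻¹ * (G * Uᴴ) = A * Uᴴ := by
    rw [← Matrix.mul_assoc, Matrix.nonsing_inv_mul_cancel_right _ _ hGdet]
  rw [hleft, hright, Matrix.add_mul, Matrix.mul_add, Matrix.mul_add, hcross, ← Matrix.mul_assoc]
  abel

end SquareFactor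

variable [Fintype n] [Fintype d] [Fintype k] [Fintype e] [DecidableEq k] [DecidableEq e]

theorem HHT_sub_P_expansion_general
    {P : Matrix n n R} (hP : P.IsHermitian) {X : Matrix n d R}
    {Uk : Matrix n k R} {Ue : Matrix n e R} {Vk : Matrix d k R} {Ve : Matrix d e R}
    {Sk : Matrix k k R} {Se : Matrix e e R}
    (hUk : Ukᴴ * Uk = 1) (hUkUe : Ukᴴ * Ue = 0)
    (hVk : Vkᴴ * Vk = 1) (hVe : Veᴴ * Ve = 1) (hVkVe : Vkᴴ * Ve = 0)
    (hSk : IsUnit Sk.det) (hX : X = Uk * Sk * Vkᴴ + Ue * Se * Veᴴ)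
    {W : Matrix d k R} (hVkW : Vkᴴ * W = (Skᴴ * Sk)⁻¹) (hVeW : Veᴴ * W = 0) :
    let E : Matrix n n R := P - X * Xᴴ
    let H : Matrix n k R := P * X * W
    H * Hᴴ - P =
      E * Uk * Ukᴴ + Uk * Ukᴴ * E + E * Uk * (Sk * Skᴴ)⁻¹ * Ukᴴ * E
        - Ue * (Se * Seᴴ) * Ueᴴ - E := by
  intro E H
  have hE : E.IsHermitian := hP.sub (isHermitian_mul_conjTranspose_self X)
  have hGram : X * Xᴴ = Uk * (Sk * Skᴴ) * Ukᴴ + Ue * (Se * Seᴴ) * Ueᴴ := by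
    rw [hX, orthonormal_sum_mul_conjTranspose_self _ _ hVk hVe hVkVe]
    simp only [conjTranspose_mul, Matrix.mul_assoc]
  have hP_eq : P = E + (Uk * (Sk * Skᴴ) * Ukᴴ + Ue * (Se * Seᴴ) * Ueᴴ) := by
    rw [← hGram, sub_add_cancel]
  have hPUk : P * Uk = E * Uk + Uk * (Sk * Skᴴ) := by
    have hUeUk : Ueᴴ * Uk = 0 := by simpa using congrArg conjTranspose hUkUe
    rw [hP_eq, Matrix.add_mul, add_mul_mul_eq_of_right_eq_zero _ _ hUk hUeUk, Matrix.mul_one]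
  have hH : H = P * Uk * (Sk * (Skᴴ * Sk)⁻¹) := by
    rw [show H = P * (X * W) from Matrix.mul_assoc P X W, hX,
      add_mul_mul_eq_of_right_eq_zero _ _ hVkW hVeW]
    simp only [Matrix.mul_assoc]
  have hHH : H * Hᴴ = P * Uk * (Sk * Skᴴ)⁻¹ * (P * Uk)ᴴ := by
    rw [hH, conjTranspose_mul (P * Uk), ← Matrix.mul_assoc, Matrix.mul_assoc (P * Uk),
      mul_inv_mul_conjTranspose_self hSk]
  have hSkSk : IsUnit (Sk * Skᴴ).det := by
    rw [det_mul, det_conjTranspose]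
    exact hSk.mul hSk.star
  rw [hHH, hPUk,
    add_mul_inv_mul_conjTranspose_add _ _ (isHermitian_mul_conjTranspose_self Sk) hSkSk,
    conjTranspose_mul, hE.eq, hP_eq]
  simp only [← Matrix.mul_assoc]
  abel

end ConjTranspose

lemma diagonal_mul_self {R k : Type*} [Semiring R] [Fintype k] [DecidableEq k] (s : k → R) :
    diagonal s * diagonal s = diagonal fun i => s i ^ 2 := by
  simp only [diagonal_mul_diagonal, sq]

lemma inv_diagonal_of_ne_zero {K k : Type*} [Field K] [Fintype k] [DecidableEq k] {s : k → K}
    (hs : ∀ i, s i ≠ 0) : (diagonal s)⁻¹ = diagonal fun i => (s i)⁻¹ :=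
  Matrix.inv_eq_right_inv <| by simp [hs]

/-- Exact expansion of H Hᵀ − P for the linear GNN module H = P X W with
W chosen so that Vₖᵀ W = Σₖ⁻² and Vₑᵀ W = 0, where
X = Uₖ Σₖ Vₖᵀ + Uₑ Σₑ Vₑᵀ is an SVD split and E = P − X Xᵀ. -/
theorem HHT_sub_P_expansion
    {n d k e : ℕ}
    (P : Matrix (Fin n) (Fin n) ℝ) (hP : Pᵀ = P)
    (X : Matrix (Fin n) (Fin d) ℝ)
    (Uk : Matrix (Fin n) (Fin k) ℝ) (Ue : Matrix (Fin n) (Fin e) ℝ)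
    (Vk : Matrix (Fin d) (Fin k) ℝ) (Ve : Matrix (Fin d) (Fin e) ℝ)
    (sk : Fin k → ℝ) (se : Fin e → ℝ)
    (hUk : Ukᵀ * Uk = 1) (hUe : Ueᵀ * Ue = 1) (hUkUe : Ukᵀ * Ue = 0)
    (hVk : Vkᵀ * Vk = 1) (hVe : Veᵀ * Ve = 1) (hVkVe : Vkᵀ * Ve = 0)
    (hsk : ∀ i, sk i ≠ 0)
    (hX : X = Uk * Matrix.diagonal sk * Vkᵀ + Ue * Matrix.diagonal se * Veᵀ)
    (W : Matrix (Fin d) (Fin k) ℝ)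
    (hW1 : Vkᵀ * W = Matrix.diagonal (fun i => (sk i ^ 2)⁻¹))
    (hW2 : Veᵀ * W = 0) :
    let E : Matrix (Fin n) (Fin n) ℝ := P - X * Xᵀ
    let H : Matrix (Fin n) (Fin k) ℝ := P * X * W
    H * Hᵀ - P =
      E * Uk * Ukᵀ + Uk * Ukᵀ * E
        + E * Uk * Matrix.diagonal (fun i => (sk i ^ 2)⁻¹) * Ukᵀ * E
        - Ue * Matrix.diagonal (fun i => se i ^ 2) * Ueᵀ - E := by
  have hSk : IsUnit (diagonal sk).det := by simpa [Finset.prod_ne_zero_iff] using hsk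
  have hinv : (diagonal fun i => sk i ^ 2)⁻¹ = diagonal fun i => (sk i ^ 2)⁻¹ :=
    inv_diagonal_of_ne_zero fun i => pow_ne_zero 2 (hsk i)
  simpa only [conjTranspose_eq_transpose_of_trivial, diagonal_transpose, diagonal_mul_self, hinv]
    using HHT_sub_P_expansion_general (Sk := diagonal sk) (Se := diagonal se)
      hP hUk hUkUe hVk hVe hVkVe hSk hX (by simpa only [conjTranspose_eq_transpose_of_trivial,
        diagonal_transpose, diagonal_mul_self, hinv] using hW1) hW2
end

section
/- Let P ∈ R^{n×n} be symmetric and X ∈ R^{n×d} of rank r ≤ k with singular value decomposition X = U_r Σ_r V_r^T, where U_r ∈ R^{n×r} and V_r ∈ R^{d×r} have orthonormal columns and Σ_r ∈ R^{r×r} is diagonal and invertible. Set E = P − X X^T. If W ∈ R^{d×k} satisfies V_r^T W [restricted to its first r columns as W = [W_r; 0] with V_r^T W_r = Σ_r^{-2}] then with H = P X W: H H^T − P = E U_r U_r^T + U_r U_r^T E + E U_r Σ_r^{-2} U_r^T E − E. -/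
open Matrix

/-!
Padding `Wr` by zero columns does not change `W * Wᵀ`, and `X * Wr = Ur * Σ⁻¹`, so
`H * Hᵀ = P * (Ur * Σ⁻² * Urᵀ) * Pᵀ`. Now substitute `P = E + Ur * Σ² * Urᵀ` on both sides: since
`Urᵀ * Ur = 1`, each product of `Ur * Σ² * Urᵀ` with the middle factor collapses to `Ur * Urᵀ`,
and the term free of `E` is `Ur * Σ² * Urᵀ = P - E`.
-/

section PadCols

variable {m n ρ κ R : Type*}

/-- The matrix whose column `e j` is column `j` of `A` and whose remaining columns vanish. For
`e = Fin.castLE h` this is the block matrix `[A 0]`. The value is meaningful for injective `e`;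
otherwise `Function.extend` picks one of the columns of `A` competing for the same position. -/
noncomputable def padCols [Zero R] (e : ρ → κ) (A : Matrix m ρ R) : Matrix m κ R :=
  of fun i => Function.extend e (A i) 0

theorem padCols_castLE [Zero R] {r k : ℕ} (h : r ≤ k) (A : Matrix m (Fin r) R) :
    padCols (Fin.castLE h) A =
      of fun i (j : Fin k) => if hj : (j : ℕ) < r then A i ⟨j, hj⟩ else 0 := by
  ext i j
  by_cases hj : (j : ℕ) < r
  · simpa [padCols, hj] using
      (Fin.castLE_injective h).extend_apply (A i) 0 ⟨j, hj⟩
  · have hj_range : ¬∃ a, Fin.castLE h a = j := by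
      rintro ⟨a, rfl⟩
      exact hj a.isLt
    simp [padCols, hj, Function.extend_apply' _ _ _ hj_range]

theorem padCols_mul_transpose_padCols [NonUnitalNonAssocSemiring R] [Fintype ρ] [Fintype κ]
    {e : ρ → κ} (he : e.Injective) (A : Matrix m ρ R) (B : Matrix n ρ R) :
    padCols e A * (padCols e B)ᵀ = A * Bᵀ := by
  ext i j
  refine (Fintype.sum_of_injective e he _ _ (fun c hc => ?_) fun c => ?_).symm
  · simp [padCols, Function.extend_apply' _ _ _ hc]
  · simp [padCols, he.extend_apply]

end PadCols

section OrthonormalColumns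

variable {n d ρ σ R : Type*} [Fintype d] [Fintype ρ]

theorem add_conj_mul_conj_mul_add_conj [Semiring R] [Fintype n] [DecidableEq ρ]
    {U : Matrix n ρ R} {U' : Matrix ρ n R} {G D : Matrix ρ ρ R} (hU : U' * U = 1) (hGD : G * D = 1)
    (hDG : D * G = 1) (E E' : Matrix n n R) :
    (E + U * G * U') * (U * D * U') * (E' + U * G * U') =
      E * U * U' + U * U' * E' + E * U * D * U' * E' + U * G * U' := by
  have left_factor : (E + U * G * U') * U = E * U + U * G := by
    rw [Matrix.add_mul, Matrix.mul_assoc (U * G), hU, Matrix.mul_one]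
  have right_factor : U' * (E' + U * G * U') = U' * E' + G * U' := by
    rw [Matrix.mul_add, Matrix.mul_assoc U, ← Matrix.mul_assoc U', hU, Matrix.one_mul]
  have cancel_left : (E * U + U * G) * D = E * U * D + U := by
    rw [Matrix.add_mul, Matrix.mul_assoc U, hGD, Matrix.mul_one]
  have cancel_right : E * U * D * (G * U') = E * U * U' := by
    rw [← Matrix.mul_assoc, Matrix.mul_assoc (E * U), hDG, Matrix.mul_one]
  calc (E + U * G * U') * (U * D * U') * (E' + U * G * U')
      = (E + U * G * U') * U * D * (U' * (E' + U * G * U')) := by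
        simp only [Matrix.mul_assoc]
    _ = (E * U * D + U) * (U' * E' + G * U') := by
        rw [left_factor, right_factor, cancel_left]
    _ = E * U * D * (U' * E') + E * U * U' + (U * (U' * E') + U * (G * U')) := by
        rw [Matrix.add_mul, Matrix.mul_add, Matrix.mul_add, cancel_right]
    _ = E * U * U' + U * U' * E' + E * U * D * U' * E' + U * G * U' := by
        simp only [← Matrix.mul_assoc]
        abel

theorem mul_mul_transpose_mul_self_transpose [CommSemiring R] [Fintype σ] [DecidableEq σ]
    {V : Matrix d σ R} (hV : Vᵀ * V = 1) (U : Matrix n ρ R) (S : Matrix ρ σ R) :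
    U * S * Vᵀ * (U * S * Vᵀ)ᵀ = U * (S * Sᵀ) * Uᵀ := by
  calc U * S * Vᵀ * (U * S * Vᵀ)ᵀ = U * S * (Vᵀ * V) * (Sᵀ * Uᵀ) := by
        simp only [transpose_mul, transpose_transpose, Matrix.mul_assoc]
    _ = U * (S * Sᵀ) * Uᵀ := by
        simp only [hV, Matrix.mul_one, Matrix.mul_assoc]

theorem svd_mul_transpose_self [CommSemiring R] [DecidableEq ρ] {X : Matrix n d R}
    {U : Matrix n ρ R} {V : Matrix d ρ R} {s : ρ → R} (hV : Vᵀ * V = 1)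
    (hX : X = U * diagonal s * Vᵀ) :
    X * Xᵀ = U * diagonal (fun i => s i ^ 2) * Uᵀ := by
  rw [hX, mul_mul_transpose_mul_self_transpose hV]
  simp only [diagonal_transpose, diagonal_mul_diagonal, sq]

end OrthonormalColumns

section InverseSingularValues

variable {m n d ρ κ K : Type*} [Fintype d] [Fintype ρ] [DecidableEq ρ] [Field K]

theorem diagonal_sq_mul_diagonal_sq_inv {s : ρ → K} (hs : ∀ i, s i ≠ 0) :
    diagonal (fun i => s i ^ 2) * diagonal (fun i => (s i ^ 2)⁻¹) = 1 := by
  simp [diagonal_mul_diagonal, hs]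

theorem svd_mul_eq_mul_diagonal_inv {X : Matrix n d K} {U : Matrix n ρ K} {V W : Matrix d ρ K}
    {s : ρ → K} (hX : X = U * diagonal s * Vᵀ)
    (hW : Vᵀ * W = diagonal fun i => (s i ^ 2)⁻¹) :
    X * W = U * diagonal fun i => (s i)⁻¹ := by
  have mul_sq_inv (i : ρ) : s i * (s i ^ 2)⁻¹ = (s i)⁻¹ := by
    field_simp
  rw [hX, Matrix.mul_assoc, hW, Matrix.mul_assoc, diagonal_mul_diagonal]
  simp only [mul_sq_inv]

theorem embedding_mul_transpose_self [Fintype n] [Fintype κ] {X : Matrix n d K}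
    {U : Matrix n ρ K} {V : Matrix d ρ K} {s : ρ → K} (hX : X = U * diagonal s * Vᵀ)
    {e : ρ → κ} (he : e.Injective) {W : Matrix d κ K} {Wr : Matrix d ρ K}
    (hWr : Vᵀ * Wr = diagonal fun i => (s i ^ 2)⁻¹) (hW : W = padCols e Wr)
    (P : Matrix m n K) :
    P * X * W * (P * X * W)ᵀ = P * (U * diagonal (fun i => (s i ^ 2)⁻¹) * Uᵀ) * Pᵀ := by
  calc P * X * W * (P * X * W)ᵀ = P * X * (W * Wᵀ) * (P * X)ᵀ := by
        rw [transpose_mul (P * X) W]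
        simp only [Matrix.mul_assoc]
    _ = P * (X * Wr * (X * Wr)ᵀ) * Pᵀ := by
        rw [hW, padCols_mul_transpose_padCols he]
        simp only [transpose_mul, Matrix.mul_assoc]
    _ = P * (U * (diagonal (fun i => (s i)⁻¹) * diagonal fun i => (s i)⁻¹) * Uᵀ) * Pᵀ := by
        rw [svd_mul_eq_mul_diagonal_inv hX hWr]
        simp only [transpose_mul, diagonal_transpose, Matrix.mul_assoc]
    _ = P * (U * diagonal (fun i => (s i ^ 2)⁻¹) * Uᵀ) * Pᵀ := by
        simp only [diagonal_mul_diagonal, sq, mul_inv]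

theorem HHT_sub_P_expansion_low_rank_general [Fintype n] [Fintype κ] (P : Matrix n n K)
    {X : Matrix n d K} {U : Matrix n ρ K} {V : Matrix d ρ K} {s : ρ → K} (hU : Uᵀ * U = 1)
    (hV : Vᵀ * V = 1) (hs : ∀ i, s i ≠ 0) (hX : X = U * diagonal s * Vᵀ)
    {e : ρ → κ} (he : e.Injective) {W : Matrix d κ K} {Wr : Matrix d ρ K}
    (hWr : Vᵀ * Wr = diagonal fun i => (s i ^ 2)⁻¹) (hW : W = padCols e Wr) :
    let E : Matrix n n K := P - X * Xᵀ
    let H : Matrix n κ K := P * X * W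
    H * Hᵀ - P =
      E * U * Uᵀ + U * Uᵀ * Eᵀ + E * U * diagonal (fun i => (s i ^ 2)⁻¹) * Uᵀ * Eᵀ - E := by
  intro E H
  have hP : P = E + U * diagonal (fun i => s i ^ 2) * Uᵀ := by
    rw [← svd_mul_transpose_self hV hX, sub_add_cancel]
  have hPT : Pᵀ = Eᵀ + U * diagonal (fun i => s i ^ 2) * Uᵀ := by
    conv_lhs => rw [hP]
    simp only [transpose_add, transpose_mul, transpose_transpose, diagonal_transpose,
      Matrix.mul_assoc]
  have hGD := diagonal_sq_mul_diagonal_sq_inv hs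
  have hHHT : H * Hᵀ = E * U * Uᵀ + U * Uᵀ * Eᵀ
      + E * U * diagonal (fun i => (s i ^ 2)⁻¹) * Uᵀ * Eᵀ
      + U * diagonal (fun i => s i ^ 2) * Uᵀ := by
    rw [embedding_mul_transpose_self hX he hWr hW, hPT]
    conv_lhs => rw [hP]
    exact add_conj_mul_conj_mul_add_conj hU hGD (mul_eq_one_comm.mp hGD) E Eᵀ
  rw [hHHT, eq_sub_of_add_eq' hP.symm]
  abel

end InverseSingularValues

/-- Exact expansion of H Hᵀ − P for the linear GNN module H = P X W when
X = Uᵣ Σᵣ Vᵣᵀ has rank r ≤ k and W = [Wᵣ; 0] with Vᵣᵀ Wᵣ = Σᵣ⁻², where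
E = P − X Xᵀ. -/
theorem HHT_sub_P_expansion_low_rank
    {n d k r : ℕ} (hr : r ≤ k)
    (P : Matrix (Fin n) (Fin n) ℝ) (hP : Pᵀ = P)
    (X : Matrix (Fin n) (Fin d) ℝ)
    (Ur : Matrix (Fin n) (Fin r) ℝ) (Vr : Matrix (Fin d) (Fin r) ℝ)
    (sr : Fin r → ℝ)
    (hUr : Urᵀ * Ur = 1) (hVr : Vrᵀ * Vr = 1)
    (hsr : ∀ i, sr i ≠ 0)
    (hX : X = Ur * Matrix.diagonal sr * Vrᵀ)
    (hrank : X.rank = r)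
    (W : Matrix (Fin d) (Fin k) ℝ) (Wr : Matrix (Fin d) (Fin r) ℝ)
    (hWr : Vrᵀ * Wr = Matrix.diagonal (fun i => (sr i ^ 2)⁻¹))
    (hW : W = Matrix.of fun (i : Fin d) (j : Fin k) =>
      if h : (j : ℕ) < r then Wr i ⟨(j : ℕ), h⟩ else 0) :
    let E : Matrix (Fin n) (Fin n) ℝ := P - X * Xᵀ
    let H : Matrix (Fin n) (Fin k) ℝ := P * X * W
    H * Hᵀ - P =
      E * Ur * Urᵀ + Ur * Urᵀ * E
        + E * Ur * Matrix.diagonal (fun i => (sr i ^ 2)⁻¹) * Urᵀ * E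
        - E := by
  have hE : (P - X * Xᵀ)ᵀ = P - X * Xᵀ := by
    simp only [transpose_sub, transpose_mul, transpose_transpose, hP]
  simpa only [hE] using HHT_sub_P_expansion_low_rank_general P hUr hVr hsr hX
    (Fin.castLE_injective hr) hWr (hW.trans (padCols_castLE hr Wr).symm)
end

section
/- Let P ∈ R^{n×n} be symmetric and X ∈ R^{n×d} with rank(X) > k, with singular values σ₁ ≥ σ₂ ≥ ... Let X = U_k Σ_k V_k^T + U_e Σ_e V_e^T be its SVD split into the k leading singular triples and the rest, set E = P − X X^T, ε = ‖E‖_F, Q = U_k U_k^T − (1/2) I_n, s = ⟨E Q, Q E⟩_F/‖E Q‖_F², δ = 1 − sqrt((1+s)/2), σ* = σ_{k+1}. Then with W ∈ R^{d×k} satisfying V_k^T W = Σ_k^{-2} and V_e^T W = 0, and H = P X W: ‖P − H H^T‖_F ≤ (1−δ)ε + sqrt(k)·ε²/σ_k² + sqrt(n−k)·σ*². -/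
open Matrix

/-- Frobenius norm of a real matrix: ‖M‖_F = sqrt(tr(Mᵀ M)). -/
noncomputable def frobNorm {m n : Type*} [Fintype m] [Fintype n]
    (M : Matrix m n ℝ) : ℝ :=
  Real.sqrt ((Mᵀ * M).trace)

/-- Frobenius inner product of real matrices: ⟨M, N⟩_F = tr(Mᵀ N). -/
noncomputable def frobInner {m n : Type*} [Fintype m] [Fintype n]
    (M N : Matrix m n ℝ) : ℝ :=
  (Mᵀ * N).trace

/-!
Write `Π = Uₖ Uₖᵀ`, `Y = Uₖ Σₖ`, `Z = Uₑ Σₑ` and `G = E Uₖ Σₖ⁻¹`. Then `X Xᵀ = Y Yᵀ + Z Zᵀ`, and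
the choice of `W` gives `X W = Uₖ Σₖ⁻¹` and hence `H = G + Y`. Since `G Yᵀ = E Π`,
`P - H Hᵀ = Z Zᵀ - (E Π + Π E - E) - G Gᵀ`, and `E Π + Π E - E = E Q + Q E`.

Because `Q² = 1/4`, both `E Q` and `Q E` have norm `ε / 2`, so the law of cosines evaluates
`‖E Q + Q E‖` exactly as `(1 - δ) ε`. The other two terms are at most `‖E Uₖ Σₖ⁻¹‖² ≤ ε² / σₖ²` and
`‖Z Zᵀ‖ = ‖Zᵀ Z‖ = ‖Σₑ²‖`.
-/

section HalfReflection

variable {K A : Type*} [Field K] [NeZero (2 : K)] [Ring A] [Algebra K A]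

theorem half_smul_add_half_smul {M : Type*} [AddCommMonoid M] [Module K M] (x : M) :
    (1 / 2 : K) • x + (1 / 2 : K) • x = x := by
  rw [← add_smul, add_halves, one_smul]

theorem sub_half_mul_self_of_isIdempotentElem {p : A} (hp : IsIdempotentElem p) :
    (p - (1 / 2 : K) • (1 : A)) * (p - (1 / 2 : K) • (1 : A)) = (1 / 4 : K) • (1 : A) := by
  have half_mul_half : (1 / 2 : K) * (1 / 2) = 1 / 4 := by
    rw [one_div_mul_one_div]
    norm_num
  simp only [sub_mul, mul_sub, hp.eq, smul_mul_assoc, mul_smul_comm, one_mul, mul_one, smul_sub,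
    smul_smul, half_mul_half]
  nth_rewrite 1 [← half_smul_add_half_smul (K := K) p]
  abel

theorem mul_sub_half_add_sub_half_mul (x p : A) :
    x * (p - (1 / 2 : K) • (1 : A)) + (p - (1 / 2 : K) • (1 : A)) * x = x * p + p * x - x := by
  simp only [sub_mul, mul_sub, smul_mul_assoc, mul_smul_comm, one_mul, mul_one]
  rw [sub_add_sub_comm, half_smul_add_half_smul]

end HalfReflection

section Orthonormal

variable {m n k e R : Type*} [Fintype n]

theorem isSymm_mul_transpose [CommSemiring R] (M : Matrix m n R) : (M * Mᵀ).IsSymm := by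
  rw [IsSymm, transpose_mul, transpose_transpose]

theorem transpose_mul_eq_zero_comm [CommSemiring R] {U : Matrix n k R} {V : Matrix n e R} :
    Uᵀ * V = 0 ↔ Vᵀ * U = 0 := by
  rw [← transpose_eq_zero, transpose_mul, transpose_transpose]

variable [Fintype k] [DecidableEq k]

theorem isIdempotentElem_mul_transpose [CommSemiring R] {U : Matrix n k R} (hU : Uᵀ * U = 1) :
    IsIdempotentElem (U * Uᵀ) := by
  rw [IsIdempotentElem, Matrix.mul_assoc, ← Matrix.mul_assoc Uᵀ, hU, Matrix.one_mul]

variable [Fintype e] [DecidableEq e]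

theorem card_add_card_le_of_orthonormal [CommRing R] [Nontrivial R]
    {U : Matrix n k R} {V : Matrix n e R}
    (hU : Uᵀ * U = 1) (hV : Vᵀ * V = 1) (hUV : Uᵀ * V = 0) :
    Fintype.card k + Fintype.card e ≤ Fintype.card n := by
  have orthonormal : (fromCols U V)ᵀ * fromCols U V = 1 := by
    rw [transpose_fromCols, fromRows_mul_fromCols, hU, hV, hUV,
      transpose_mul_eq_zero_comm.mp hUV, fromBlocks_one]
  calc Fintype.card k + Fintype.card e
      = ((fromCols U V)ᵀ * fromCols U V).rank := by
        rw [orthonormal, rank_one, Fintype.card_sum]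
    _ ≤ (fromCols U V).rank := rank_mul_le_right _ _
    _ ≤ Fintype.card n := rank_le_card_height _

theorem add_mul_transpose_self_of_orthonormal [CommSemiring R]
    (A : Matrix m k R) (B : Matrix m e R) {V : Matrix n k R} {V' : Matrix n e R}
    (hV : Vᵀ * V = 1) (hV' : V'ᵀ * V' = 1) (hVV' : Vᵀ * V' = 0) :
    (A * Vᵀ + B * V'ᵀ) * (A * Vᵀ + B * V'ᵀ)ᵀ = A * Aᵀ + B * Bᵀ := by
  have mul_V : (A * Vᵀ + B * V'ᵀ) * V = A := by
    rw [Matrix.add_mul, Matrix.mul_assoc, Matrix.mul_assoc, hV,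
      transpose_mul_eq_zero_comm.mp hVV', Matrix.mul_one, Matrix.mul_zero, add_zero]
  have mul_V' : (A * Vᵀ + B * V'ᵀ) * V' = B := by
    rw [Matrix.add_mul, Matrix.mul_assoc, Matrix.mul_assoc, hV', hVV', Matrix.mul_one,
      Matrix.mul_zero, zero_add]
  rw [transpose_add, Matrix.mul_add, transpose_mul, transpose_mul, transpose_transpose,
    transpose_transpose, ← Matrix.mul_assoc, ← Matrix.mul_assoc, mul_V, mul_V']

end Orthonormal

section Frobenius

attribute [local instance] Matrix.frobeniusNormedAddCommGroup

variable {l m n k : Type*} [Fintype l] [Fintype m] [Fintype n] [Fintype k]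

theorem trace_transpose_mul_self_eq_sum_sq {R : Type*} [CommSemiring R] (M : Matrix m n R) :
    (Mᵀ * M).trace = ∑ i, ∑ j, M i j ^ 2 := by
  rw [Finset.sum_comm]
  simp [Matrix.trace, Matrix.mul_apply, sq]

theorem frobNorm_sq_eq_sum_sq (M : Matrix m n ℝ) : frobNorm M ^ 2 = ∑ i, ∑ j, M i j ^ 2 := by
  rw [frobNorm, trace_transpose_mul_self_eq_sum_sq, Real.sq_sqrt (by positivity)]

theorem frobNorm_sq (M : Matrix m n ℝ) : frobNorm M ^ 2 = (Mᵀ * M).trace := by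
  rw [frobNorm_sq_eq_sum_sq, trace_transpose_mul_self_eq_sum_sq]

theorem frobNorm_eq_norm (M : Matrix m n ℝ) : frobNorm M = ‖M‖ := by
  rw [frobenius_norm_def, frobNorm, trace_transpose_mul_self_eq_sum_sq, Real.sqrt_eq_rpow]
  simp

theorem frobNorm_nonneg (M : Matrix m n ℝ) : 0 ≤ frobNorm M :=
  Real.sqrt_nonneg _

theorem frobNorm_ne_zero {M : Matrix m n ℝ} : frobNorm M ≠ 0 ↔ M ≠ 0 := by
  rw [frobNorm_eq_norm, norm_ne_zero_iff]

theorem frobNorm_transpose (M : Matrix m n ℝ) : frobNorm Mᵀ = frobNorm M := by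
  simp only [frobNorm_eq_norm, frobenius_norm_transpose]

theorem frobNorm_sub_le (M N : Matrix m n ℝ) : frobNorm (M - N) ≤ frobNorm M + frobNorm N := by
  simpa only [frobNorm_eq_norm] using norm_sub_le M N

theorem frobNorm_mul_le (M : Matrix l m ℝ) (N : Matrix m n ℝ) :
    frobNorm (M * N) ≤ frobNorm M * frobNorm N := by
  simpa only [frobNorm_eq_norm] using frobenius_norm_mul M N

theorem frobNorm_sq_eq_trace_mul_transpose (M : Matrix m n ℝ) :
    frobNorm M ^ 2 = (M * Mᵀ).trace := by
  rw [frobNorm_sq, trace_mul_comm]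

theorem frobNorm_mul_transpose_self_le (M : Matrix m n ℝ) :
    frobNorm (M * Mᵀ) ≤ frobNorm M ^ 2 := by
  simpa only [frobNorm_transpose, sq] using frobNorm_mul_le M Mᵀ

theorem frobNorm_mul_transpose_self (M : Matrix m n ℝ) :
    frobNorm (M * Mᵀ) = frobNorm (Mᵀ * M) := by
  simp only [frobNorm, transpose_mul, transpose_transpose]
  rw [Matrix.mul_assoc M, trace_mul_comm, Matrix.mul_assoc Mᵀ, Matrix.mul_assoc Mᵀ,
    Matrix.mul_assoc M]

theorem frobNorm_add_sq (M N : Matrix m n ℝ) :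
    frobNorm (M + N) ^ 2 = frobNorm M ^ 2 + 2 * frobInner M N + frobNorm N ^ 2 := by
  have inner_comm : (Nᵀ * M).trace = (Mᵀ * N).trace := by
    rw [← trace_transpose, transpose_mul, transpose_transpose]
  simp only [frobNorm_sq, frobInner, transpose_add, Matrix.add_mul, Matrix.mul_add, trace_add,
    inner_comm]
  ring

theorem frobNorm_add_sq_of_frobNorm_eq {M N : Matrix m n ℝ} (hM : M ≠ 0)
    (hMN : frobNorm N = frobNorm M) :
    frobNorm (M + N) ^ 2 = 2 * (1 + frobInner M N / frobNorm M ^ 2) * frobNorm M ^ 2 := by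
  have := frobNorm_ne_zero.mpr hM
  rw [frobNorm_add_sq, hMN]
  field_simp
  ring

theorem frobNorm_mul_sq_of_mul_transpose_eq_smul_one [DecidableEq n] {c : ℝ} (M : Matrix m n ℝ)
    {Q : Matrix n k ℝ} (hQ : Q * Qᵀ = c • 1) :
    frobNorm (M * Q) ^ 2 = c * frobNorm M ^ 2 := by
  rw [frobNorm_sq_eq_trace_mul_transpose, frobNorm_sq_eq_trace_mul_transpose, transpose_mul,
    Matrix.mul_assoc, ← Matrix.mul_assoc Q, hQ, Matrix.smul_mul, Matrix.one_mul, Matrix.mul_smul,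
    trace_smul, smul_eq_mul]

theorem frobNorm_mul_add_mul_of_isSymm [DecidableEq n] {c : ℝ} (hc : c ≠ 0) {E Q : Matrix n n ℝ}
    (hE : E.IsSymm) (hE0 : E ≠ 0) (hQ : Q.IsSymm) (hQQ : Q * Q = c • 1) :
    frobNorm (E * Q + Q * E) =
      √(2 * c * (1 + frobInner (E * Q) (Q * E) / frobNorm (E * Q) ^ 2)) * frobNorm E := by
  have norm_EQ : frobNorm (E * Q) ^ 2 = c * frobNorm E ^ 2 :=
    frobNorm_mul_sq_of_mul_transpose_eq_smul_one E (by rw [hQ.eq, hQQ])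
  have EQ_ne_zero : E * Q ≠ 0 := frobNorm_ne_zero.mp <| by
    rw [← sq_eq_zero_iff.ne, norm_EQ]
    exact mul_ne_zero hc (pow_ne_zero 2 (frobNorm_ne_zero.mpr hE0))
  have norm_QE : frobNorm (Q * E) = frobNorm (E * Q) := by
    rw [← frobNorm_transpose, transpose_mul, hE.eq, hQ.eq]
  set s := frobInner (E * Q) (Q * E) / frobNorm (E * Q) ^ 2
  have norm_sum : frobNorm (E * Q + Q * E) ^ 2 = 2 * c * (1 + s) * frobNorm E ^ 2 := by
    calc _ = 2 * (1 + s) * frobNorm (E * Q) ^ 2 := frobNorm_add_sq_of_frobNorm_eq EQ_ne_zero norm_QE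
      _ = 2 * c * (1 + s) * frobNorm E ^ 2 := by rw [norm_EQ]; ring
  rw [← Real.sqrt_sq (frobNorm_nonneg (E * Q + Q * E)), norm_sum,
    Real.sqrt_mul' _ (sq_nonneg _), Real.sqrt_sq (frobNorm_nonneg E)]

theorem frobNorm_mul_le_of_transpose_mul_self_eq_one [DecidableEq k] (M : Matrix m n ℝ)
    {U : Matrix n k ℝ} (hU : Uᵀ * U = 1) : frobNorm (M * U) ≤ frobNorm M := by
  have pythagoras : frobNorm (M - M * (U * Uᵀ)) ^ 2 = frobNorm M ^ 2 - frobNorm (M * U) ^ 2 := by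
    have cancel : U * (Uᵀ * (U * (Uᵀ * Mᵀ))) = U * (Uᵀ * Mᵀ) := by
      rw [← Matrix.mul_assoc Uᵀ, hU, Matrix.one_mul]
    simp only [frobNorm_sq_eq_trace_mul_transpose, ← trace_sub, transpose_sub, transpose_mul,
      transpose_transpose, Matrix.sub_mul, Matrix.mul_sub, Matrix.mul_assoc, cancel, sub_self,
      sub_zero]
  refine (pow_le_pow_iff_left₀ (frobNorm_nonneg _) (frobNorm_nonneg M) two_ne_zero).mp ?_
  linarith [sq_nonneg (frobNorm (M - M * (U * Uᵀ)))]

theorem frobNorm_mul_diagonal_sq_le [DecidableEq n] (M : Matrix m n ℝ) {d : n → ℝ} {c : ℝ}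
    (hd : ∀ j, d j ^ 2 ≤ c) : frobNorm (M * diagonal d) ^ 2 ≤ c * frobNorm M ^ 2 := by
  simp only [frobNorm_sq_eq_sum_sq, mul_diagonal, mul_pow, Finset.mul_sum]
  refine Finset.sum_le_sum fun i _ => Finset.sum_le_sum fun j _ => ?_
  rw [mul_comm c]
  exact mul_le_mul_of_nonneg_left (hd j) (sq_nonneg _)

theorem frobNorm_diagonal_le [DecidableEq n] {d : n → ℝ} {c : ℝ} (hc : 0 ≤ c)
    (hd : ∀ j, |d j| ≤ c) : frobNorm (diagonal d) ≤ √(Fintype.card n) * c := by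
  have norm_one_sq : frobNorm (1 : Matrix n n ℝ) ^ 2 = Fintype.card n := by
    rw [frobNorm_sq, transpose_one, Matrix.one_mul, trace_one]
  have norm_sq_le := frobNorm_mul_diagonal_sq_le (1 : Matrix n n ℝ) (c := c ^ 2)
    fun j => sq_le_sq' (neg_le_of_abs_le (hd j)) (le_of_abs_le (hd j))
  rw [Matrix.one_mul, norm_one_sq] at norm_sq_le
  calc frobNorm (diagonal d) ≤ √(c ^ 2 * Fintype.card n) := Real.le_sqrt_of_sq_le norm_sq_le
    _ = √(Fintype.card n) * c := by
      rw [Real.sqrt_mul (sq_nonneg c), Real.sqrt_sq hc, mul_comm]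

theorem frobNorm_gram_mul_diagonal_inv_le [DecidableEq k] (E : Matrix m n ℝ) {U : Matrix n k ℝ}
    (hU : Uᵀ * U = 1) {s : k → ℝ} {σ : ℝ} (hσ : 0 < σ) (hs : ∀ i, σ ≤ s i) :
    frobNorm (E * U * diagonal (fun i => (s i)⁻¹) * (E * U * diagonal (fun i => (s i)⁻¹))ᵀ)
      ≤ frobNorm E ^ 2 / σ ^ 2 := by
  have inv_sq_le (i : k) : (s i)⁻¹ ^ 2 ≤ (σ ^ 2)⁻¹ := by
    rw [← inv_pow]
    have := hs i
    have := hσ.trans_le this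
    gcongr
  calc _ ≤ frobNorm (E * U * diagonal (fun i => (s i)⁻¹)) ^ 2 := frobNorm_mul_transpose_self_le _
    _ ≤ (σ ^ 2)⁻¹ * frobNorm (E * U) ^ 2 := frobNorm_mul_diagonal_sq_le _ inv_sq_le
    _ ≤ (σ ^ 2)⁻¹ * frobNorm E ^ 2 := by
      have := frobNorm_nonneg (E * U)
      gcongr
      exact frobNorm_mul_le_of_transpose_mul_self_eq_one E hU
    _ = frobNorm E ^ 2 / σ ^ 2 := inv_mul_eq_div _ _

theorem frobNorm_gram_mul_diagonal_le [DecidableEq k] {U : Matrix n k ℝ} (hU : Uᵀ * U = 1)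
    {s : k → ℝ} {σ : ℝ} (hs : ∀ i, |s i| ≤ σ) :
    frobNorm (U * diagonal s * (U * diagonal s)ᵀ) ≤ √(Fintype.card k) * σ ^ 2 := by
  have gram_eq : (U * diagonal s)ᵀ * (U * diagonal s) = diagonal fun i => s i * s i := by
    rw [transpose_mul, diagonal_transpose, Matrix.mul_assoc, ← Matrix.mul_assoc Uᵀ, hU,
      Matrix.one_mul, diagonal_mul_diagonal]
  rw [frobNorm_mul_transpose_self, gram_eq]
  refine frobNorm_diagonal_le (sq_nonneg σ) fun i => ?_
  rw [← sq, abs_pow]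
  gcongr
  exact hs i

end Frobenius

section Embedding

variable {n d k e K : Type*} [Fintype d] [Fintype k] [Fintype e] [DecidableEq k] [DecidableEq e]
  [Field K]
  {X : Matrix n d K} {Uk : Matrix n k K} {Ue : Matrix n e K} {Vk : Matrix d k K}
  {Ve : Matrix d e K} {sk : k → K} {se : e → K} {W : Matrix d k K}

theorem mul_weight_of_svd (hX : X = Uk * diagonal sk * Vkᵀ + Ue * diagonal se * Veᵀ)
    (hsk : ∀ i, sk i ≠ 0) (hW1 : Vkᵀ * W = diagonal (fun i => (sk i ^ 2)⁻¹))
    (hW2 : Veᵀ * W = 0) : X * W = Uk * diagonal (fun i => (sk i)⁻¹) := by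
  have cancel (i : k) : sk i * (sk i ^ 2)⁻¹ = (sk i)⁻¹ := by
    have := hsk i
    field_simp
  rw [hX, Matrix.add_mul, Matrix.mul_assoc, hW1, Matrix.mul_assoc (Ue * _), hW2, Matrix.mul_zero,
    add_zero, Matrix.mul_assoc, diagonal_mul_diagonal]
  simp only [cancel]

variable [Fintype n]

theorem add_mul_transpose_self_of_isSymm {R : Type*} [CommSemiring R] {E : Matrix n n R}
    (hE : E.IsSymm) (U : Matrix n k R) {S S' : Matrix k k R} (hS : S' * Sᵀ = 1) :
    (E * U * S' + U * S) * (E * U * S' + U * S)ᵀ =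
      E * U * S' * (E * U * S')ᵀ + (E * (U * Uᵀ) + U * Uᵀ * E) + U * S * (U * S)ᵀ := by
  have cross : E * U * S' * (U * S)ᵀ = E * (U * Uᵀ) := by
    rw [transpose_mul, Matrix.mul_assoc, ← Matrix.mul_assoc S', hS, Matrix.one_mul,
      Matrix.mul_assoc]
  have cross_transpose : U * S * (E * U * S')ᵀ = U * Uᵀ * E := by
    simpa only [transpose_mul, transpose_transpose, hE.eq, Matrix.mul_assoc] using
      congrArg transpose cross
  rw [transpose_add, Matrix.mul_add, Matrix.add_mul, Matrix.add_mul, cross, cross_transpose]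
  abel

theorem add_gram_mul_diagonal_inv (se : e → K) (hUk : Ukᵀ * Uk = 1) (hUkUe : Ukᵀ * Ue = 0)
    (hsk : ∀ i, sk i ≠ 0) :
    (Uk * diagonal sk * (Uk * diagonal sk)ᵀ + Ue * diagonal se * (Ue * diagonal se)ᵀ) *
      (Uk * diagonal (fun i => (sk i)⁻¹)) = Uk * diagonal sk := by
  have leading : (Uk * diagonal sk)ᵀ * (Uk * diagonal (fun i => (sk i)⁻¹)) = 1 := by
    rw [transpose_mul, Matrix.mul_assoc, ← Matrix.mul_assoc Ukᵀ, hUk, Matrix.one_mul]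
    simp [hsk]
  have trailing : (Ue * diagonal se)ᵀ * (Uk * diagonal (fun i => (sk i)⁻¹)) = 0 := by
    rw [transpose_mul, Matrix.mul_assoc, ← Matrix.mul_assoc Ueᵀ,
      transpose_mul_eq_zero_comm.mp hUkUe, Matrix.zero_mul, Matrix.mul_zero]
  rw [Matrix.add_mul, Matrix.mul_assoc _ _ (Uk * _), leading, Matrix.mul_assoc _ _ (Uk * _),
    trailing, Matrix.mul_one, Matrix.mul_zero, add_zero]

theorem sub_embedding_gram_eq [DecidableEq n] [NeZero (2 : K)] {P : Matrix n n K} (hP : P.IsSymm)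
    (hUk : Ukᵀ * Uk = 1) (hUkUe : Ukᵀ * Ue = 0)
    (hVk : Vkᵀ * Vk = 1) (hVe : Veᵀ * Ve = 1) (hVkVe : Vkᵀ * Ve = 0)
    (hX : X = Uk * diagonal sk * Vkᵀ + Ue * diagonal se * Veᵀ) (hsk : ∀ i, sk i ≠ 0)
    (hW1 : Vkᵀ * W = diagonal (fun i => (sk i ^ 2)⁻¹)) (hW2 : Veᵀ * W = 0) :
    let E := P - X * Xᵀ
    let Q := Uk * Ukᵀ - (1 / 2 : K) • (1 : Matrix n n K)
    let G := E * Uk * diagonal (fun i => (sk i)⁻¹)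
    P - P * X * W * (P * X * W)ᵀ =
      Ue * diagonal se * (Ue * diagonal se)ᵀ - (E * Q + Q * E) - G * Gᵀ := by
  intro E Q G
  have gram : X * Xᵀ =
      Uk * diagonal sk * (Uk * diagonal sk)ᵀ + Ue * diagonal se * (Ue * diagonal se)ᵀ := by
    rw [hX, add_mul_transpose_self_of_orthonormal _ _ hVk hVe hVkVe]
  have P_eq : P = E + X * Xᵀ := (sub_add_cancel _ _).symm
  have embedding : P * X * W = G + Uk * diagonal sk := by
    rw [Matrix.mul_assoc, mul_weight_of_svd hX hsk hW1 hW2, P_eq, Matrix.add_mul, gram,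
      add_gram_mul_diagonal_inv se hUk hUkUe hsk, ← Matrix.mul_assoc]
  have E_symm : E.IsSymm := hP.sub (isSymm_mul_transpose X)
  rw [embedding, add_mul_transpose_self_of_isSymm E_symm Uk (by simp [hsk]),
    mul_sub_half_add_sub_half_mul]
  nth_rewrite 1 [P_eq]
  rw [gram]
  abel

end Embedding

theorem error_bound_rank_gt_k_general {n d k e : Type*} [Fintype n] [Fintype d] [Fintype k]
    [Fintype e] [DecidableEq n] [DecidableEq k] [DecidableEq e]
    {P : Matrix n n ℝ} (hP : P.IsSymm) {X : Matrix n d ℝ}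
    {Uk : Matrix n k ℝ} {Ue : Matrix n e ℝ} {Vk : Matrix d k ℝ} {Ve : Matrix d e ℝ}
    {sk : k → ℝ} {se : e → ℝ}
    (hUk : Ukᵀ * Uk = 1) (hUe : Ueᵀ * Ue = 1) (hUkUe : Ukᵀ * Ue = 0)
    (hVk : Vkᵀ * Vk = 1) (hVe : Veᵀ * Ve = 1) (hVkVe : Vkᵀ * Ve = 0)
    (hX : X = Uk * diagonal sk * Vkᵀ + Ue * diagonal se * Veᵀ)
    (hsk : ∀ i, 0 < sk i) (hse : ∀ i, 0 ≤ se i) {σk σstar : ℝ}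
    (hσk : IsLeast (Set.range sk) σk) (hσstar : IsGreatest (insert 0 (Set.range se)) σstar)
    {W : Matrix d k ℝ}
    (hW1 : Vkᵀ * W = diagonal (fun i => (sk i ^ 2)⁻¹)) (hW2 : Veᵀ * W = 0) :
    let E := P - X * Xᵀ
    let ε := frobNorm E
    let Q := Uk * Ukᵀ - (1 / 2 : ℝ) • (1 : Matrix n n ℝ)
    let s := frobInner (E * Q) (Q * E) / frobNorm (E * Q) ^ 2
    let δ := 1 - √((1 + s) / 2)
    E ≠ 0 →
    let H := P * X * W
    frobNorm (P - H * Hᵀ) ≤ (1 - δ) * ε + ε ^ 2 / σk ^ 2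
      + √(Fintype.card n - Fintype.card k : ℕ) * σstar ^ 2 := by
  intro E ε Q s δ hE0 H
  have E_symm : E.IsSymm := hP.sub (isSymm_mul_transpose X)
  have Q_symm : Q.IsSymm := (isSymm_mul_transpose Uk).sub (isSymm_one.smul _)
  have Q_sq : Q * Q = (1 / 4 : ℝ) • 1 :=
    sub_half_mul_self_of_isIdempotentElem (isIdempotentElem_mul_transpose hUk)
  have linear_term : frobNorm (E * Q + Q * E) = (1 - δ) * ε := by
    rw [frobNorm_mul_add_mul_of_isSymm (by norm_num) E_symm hE0 Q_symm Q_sq, sub_sub_cancel]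
    congr 2
    ring
  have σk_pos : 0 < σk := by
    obtain ⟨i, rfl⟩ := hσk.1
    exact hsk i
  have quadratic_term := frobNorm_gram_mul_diagonal_inv_le E hUk σk_pos
    fun i => hσk.2 (Set.mem_range_self i)
  have dim_le : Fintype.card e ≤ Fintype.card n - Fintype.card k :=
    le_tsub_of_add_le_left (card_add_card_le_of_orthonormal hUk hUe hUkUe)
  have se_le (i : e) : |se i| ≤ σstar :=
    (abs_of_nonneg (hse i)).trans_le (hσstar.2 (Or.inr (Set.mem_range_self i)))
  have tail_term : frobNorm (Ue * diagonal se * (Ue * diagonal se)ᵀ) ≤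
      √(Fintype.card n - Fintype.card k : ℕ) * σstar ^ 2 :=
    (frobNorm_gram_mul_diagonal_le hUe se_le).trans (by gcongr)
  rw [sub_embedding_gram_eq hP hUk hUkUe hVk hVe hVkVe hX (fun i => (hsk i).ne') hW1 hW2]
  refine (frobNorm_sub_le _ _).trans ((add_le_add_left (frobNorm_sub_le _ _) _).trans ?_)
  linarith

/-- Error bound for the linear GNN module H = P X W when rank(X) > k:
‖P − H Hᵀ‖_F ≤ (1−δ)ε + √k ε²/σₖ² + √(n−k) σ*². -/
theorem error_bound_rank_gt_k
    {n d k e : ℕ}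
    (P : Matrix (Fin n) (Fin n) ℝ) (hP : Pᵀ = P)
    (X : Matrix (Fin n) (Fin d) ℝ)
    (Uk : Matrix (Fin n) (Fin k) ℝ) (Ue : Matrix (Fin n) (Fin e) ℝ)
    (Vk : Matrix (Fin d) (Fin k) ℝ) (Ve : Matrix (Fin d) (Fin e) ℝ)
    (sk : Fin k → ℝ) (se : Fin e → ℝ)
    (hUk : Ukᵀ * Uk = 1) (hUe : Ueᵀ * Ue = 1) (hUkUe : Ukᵀ * Ue = 0)
    (hVk : Vkᵀ * Vk = 1) (hVe : Veᵀ * Ve = 1) (hVkVe : Vkᵀ * Ve = 0)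
    (hX : X = Uk * Matrix.diagonal sk * Vkᵀ + Ue * Matrix.diagonal se * Veᵀ)
    (hsk : ∀ i, 0 < sk i) (hse : ∀ i, 0 ≤ se i)
    (horder : ∀ i j, se j ≤ sk i)
    (hrank : k < X.rank)
    (σk σstar : ℝ)
    (hσk : IsLeast (Set.range sk) σk)
    (hσstar : IsGreatest (insert 0 (Set.range se)) σstar)
    (W : Matrix (Fin d) (Fin k) ℝ)
    (hW1 : Vkᵀ * W = Matrix.diagonal (fun i => (sk i ^ 2)⁻¹))
    (hW2 : Veᵀ * W = 0) :
    let E : Matrix (Fin n) (Fin n) ℝ := P - X * Xᵀ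
    let ε : ℝ := frobNorm E
    let Q : Matrix (Fin n) (Fin n) ℝ :=
      Uk * Ukᵀ - (1/2 : ℝ) • (1 : Matrix (Fin n) (Fin n) ℝ)
    let s : ℝ := frobInner (E * Q) (Q * E) / (frobNorm (E * Q)) ^ 2
    let δ : ℝ := 1 - Real.sqrt ((1 + s) / 2)
    E ≠ 0 →
    let H : Matrix (Fin n) (Fin k) ℝ := P * X * W
    frobNorm (P - H * Hᵀ)
      ≤ (1 - δ) * ε + Real.sqrt k * ε ^ 2 / σk ^ 2
          + Real.sqrt (n - k : ℕ) * σstar ^ 2 := by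
  intro E ε Q s δ hE0 _
  refine (error_bound_rank_gt_k_general hP hUk hUe hUkUe hVk hVe hVkVe hX hsk hse hσk hσstar
    hW1 hW2 hE0).trans ?_
  have one_le_sqrt_k : 1 ≤ √(k : ℝ) := Real.one_le_sqrt.mpr (mod_cast hσk.1.elim fun i _ => i.pos)
  rw [Fintype.card_fin, Fintype.card_fin]
  gcongr
  exact le_mul_of_one_le_left (sq_nonneg ε) one_le_sqrt_k
end

section
/- (Theorem 2) Let P ∈ R^{n×n} be symmetric positive semidefinite, X ∈ R^{n×d} with rank(X) > k, E = P − X X^T and ε = ‖E‖_F. Assume X X^T and E commute (equivalently, share a common orthonormal eigenbasis). Let σ* denote the (k+1)-th largest singular value of X. Then there exists W ∈ R^{d×k} such that, with H = P X W, ‖P − H H^T‖_F ≤ ε + sqrt(n−k)·σ*². -/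
open Matrix

/-- The (j+1)-th largest singular value of a real n×m matrix (0-indexed:
`svDesc M 0` is the largest), defined as 0 when j is out of range.
Singular values are the square roots of the eigenvalues of Mᴴ M. -/
noncomputable def svDesc {n m : ℕ} (M : Matrix (Fin n) (Fin m) ℝ) (j : ℕ) : ℝ :=
  if h : j < m then
    Real.sqrt ((Matrix.isHermitian_conjTranspose_mul_self M).eigenvalues
      (Tuple.sort (Matrix.isHermitian_conjTranspose_mul_self M).eigenvalues
        ⟨m - 1 - j, by omega⟩))
  else 0

/-!
In a common orthonormal eigenbasis of `X Xᵀ` (eigenvalues `aᵢ ≥ 0`) and `P` (eigenvalues `pᵢ`), the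
choice `W = Xᵀ U G` gives `H Hᵀ` the eigenvalues `(pᵢ aᵢ)² vᵢ`, where `G Gᵀ = diag v` and `v` is any
nonnegative vector with at most `k` nonzero entries. Spend these entries on a set `S` containing
every `i` with `aᵢ > σ*²`. On `S` the residual eigenvalue can be made at most `|pᵢ - aᵢ|` in
absolute value, where `pᵢ - aᵢ` is the corresponding eigenvalue of `E`; off `S` it is
`pᵢ = (pᵢ - aᵢ) + aᵢ` with `0 ≤ aᵢ ≤ σ*²`. The triangle inequality in `ℓ²` then gives the bound.
-/

open Finset Unitary WithLp

section SimultaneousDiagonalization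

variable {𝕜 ι : Type*} [RCLike 𝕜] [Fintype ι]

lemma exists_orthonormalBasis_joint_eigenvectors {E : Type*} [NormedAddCommGroup E]
    [InnerProductSpace 𝕜 E] [FiniteDimensional 𝕜 E] (hι : Module.finrank 𝕜 E = Fintype.card ι)
    {S T : E →ₗ[𝕜] E} (hS : S.IsSymmetric) (hT : T.IsSymmetric) (hST : Commute S T) :
    ∃ (b : OrthonormalBasis ι 𝕜 E) (μ ν : ι → 𝕜),
      (∀ i, S (b i) = μ i • b i) ∧ ∀ i, T (b i) = ν i • b i := by
  classical
  let V (c : 𝕜 × 𝕜) := Module.End.eigenspace S c.2 ⊓ Module.End.eigenspace T c.1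
  have internal : DirectSum.IsInternal V := hS.directSum_isInternal_of_commute hT hST
  have : Fintype {c // V c ≠ ⊥} :=
    (Submodule.finite_ne_bot_of_iSupIndep internal.submodule_iSupIndep).fintype
  have internal' := DirectSum.isInternal_ne_bot_iff.2 internal
  have orthogonal := (hS.orthogonalFamily_eigenspace_inf_eigenspace hT).comp
    (Subtype.val_injective (p := fun c ↦ V c ≠ ⊥))
  let index (i : ι) := internal'.subordinateOrthonormalBasisIndex hι
    (Fintype.equivFin ι i) orthogonal
  have joint (i : ι) := internal'.subordinateOrthonormalBasis_subordinate hι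
    (Fintype.equivFin ι i) orthogonal
  refine ⟨(internal'.subordinateOrthonormalBasis hι orthogonal).reindex (Fintype.equivFin ι).symm,
    fun i ↦ (index i).1.2, fun i ↦ (index i).1.1, fun i ↦ ?_, fun i ↦ ?_⟩
  · simpa using Module.End.mem_eigenspace_iff.1 (joint i).1
  · simpa using Module.End.mem_eigenspace_iff.1 (joint i).2

variable [DecidableEq ι]

lemma eq_conjStarAlgAut_diagonal_of_mul_eq {U : unitaryGroup ι 𝕜} {A : Matrix ι ι 𝕜} {a : ι → 𝕜}
    (h : A * U = U * diagonal a) : A = conjStarAlgAut 𝕜 _ U (diagonal a) := by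
  rw [conjStarAlgAut_apply, ← h, Matrix.mul_assoc, mul_star_self_of_mem U.2, Matrix.mul_one]

lemma exists_conjStarAlgAut_diagonal_of_commute {A B : Matrix ι ι 𝕜} (hA : A.IsHermitian)
    (hB : B.IsHermitian) (hAB : Commute A B) :
    ∃ (U : unitaryGroup ι 𝕜) (a b : ι → 𝕜),
      A = conjStarAlgAut 𝕜 _ U (diagonal a) ∧ B = conjStarAlgAut 𝕜 _ U (diagonal b) := by
  have toEuclideanLin_commute : Commute (toEuclideanLin A) (toEuclideanLin B) := by
    ext x i
    simp [Module.End.mul_apply, toLpLin_apply, hAB.eq]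
  obtain ⟨v, a, b, hAv, hBv⟩ := exists_orthonormalBasis_joint_eigenvectors
    (finrank_euclideanSpace (𝕜 := 𝕜) (ι := ι)) (isSymmetric_toEuclideanLin_iff.2 hA)
    (isSymmetric_toEuclideanLin_iff.2 hB) toEuclideanLin_commute
  let U : unitaryGroup ι 𝕜 := ⟨(EuclideanSpace.basisFun ι 𝕜).toBasis.toMatrix v.toBasis,
    (EuclideanSpace.basisFun ι 𝕜).toMatrix_orthonormalBasis_mem_unitary v⟩
  have mul_U {M : Matrix ι ι 𝕜} {c : ι → 𝕜} (h : ∀ j, toEuclideanLin M (v j) = c j • v j) :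
      M * U = U * diagonal c := by
    ext i j
    rw [mul_diagonal, Matrix.mul_apply]
    simpa [toLpLin_apply, mulVec, dotProduct, mul_comm, U, Module.Basis.toMatrix_apply]
      using congrArg (· i) (h j)
  exact ⟨U, a, b, eq_conjStarAlgAut_diagonal_of_mul_eq (mul_U hAv),
    eq_conjStarAlgAut_diagonal_of_mul_eq (mul_U hBv)⟩

open scoped ComplexOrder in
lemma posSemidef_conjStarAlgAut_iff {U : unitaryGroup ι 𝕜} {A : Matrix ι ι 𝕜} :
    (conjStarAlgAut 𝕜 _ U A).PosSemidef ↔ A.PosSemidef := by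
  rw [conjStarAlgAut_apply, isUnit_coe.posSemidef_star_right_conjugate_iff]

end SimultaneousDiagonalization

section CharpolyRoots

variable {R m n : Type*} [CommRing R] [Fintype m] [Fintype n] [DecidableEq m] [DecidableEq n]

lemma charpoly_conjStarAlgAut [StarRing R] (U : unitaryGroup m R) (A : Matrix m m R) :
    (conjStarAlgAut R _ U A).charpoly = A.charpoly := by
  rw [conjStarAlgAut_apply, charpoly_mul_comm, ← Matrix.mul_assoc, coe_star_mul_self,
    Matrix.one_mul]

variable [IsDomain R]

lemma roots_charpoly_diagonal (a : m → R) : (diagonal a).charpoly.roots = univ.val.map a := by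
  rw [charpoly_diagonal, Polynomial.roots_prod _ _
    (prod_ne_zero_iff.2 fun i _ ↦ Polynomial.X_sub_C_ne_zero (a i))]
  simp

lemma countP_roots_charpoly_mul_comm (A : Matrix m n R) (B : Matrix n m R) (q : R → Prop)
    [DecidablePred q] (hq : ¬ q 0) :
    (A * B).charpoly.roots.countP q = (B * A).charpoly.roots.countP q := by
  have countP_X_pow_mul {f : Polynomial R} (hf : f.Monic) (r : ℕ) :
      (Polynomial.X ^ r * f).roots.countP q = f.roots.countP q := by
    rw [Polynomial.roots_mul (mul_ne_zero (pow_ne_zero _ Polynomial.X_ne_zero) hf.ne_zero)]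
    simp [Multiset.countP_nsmul, ← Multiset.cons_zero, hq]
  rw [← countP_X_pow_mul (charpoly_monic _) (Fintype.card n), charpoly_mul_comm',
    countP_X_pow_mul (charpoly_monic _)]

end CharpolyRoots

section SingularValues

lemma card_filter_sort_lt_le {α : Type*} [LinearOrder α] {d : ℕ} (f : Fin d → α) (i : Fin d) :
    #{j | f (Tuple.sort f i) < f j} ≤ d - 1 - i := by
  rw [← Fin.card_Ioi]
  refine card_le_card_of_injOn (Tuple.sort f).symm (fun j hj ↦ ?_) (Equiv.injective _).injOn
  have hj : f (Tuple.sort f i) < (f ∘ Tuple.sort f) ((Tuple.sort f).symm j) := by simpa using hj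
  simpa using (Tuple.monotone_sort f).reflect_lt hj

lemma countP_sq_svDesc_lt_roots_charpoly_le {n d : ℕ} (X : Matrix (Fin n) (Fin d) ℝ) (k : ℕ) :
    (X * Xᵀ).charpoly.roots.countP (svDesc X k ^ 2 < ·) ≤ k := by
  let hX := isHermitian_conjTranspose_mul_self X
  have roots_eq : (Xᵀ * X).charpoly.roots = univ.val.map hX.eigenvalues := by
    simpa using! hX.roots_charpoly_eq_eigenvalues
  rw [countP_roots_charpoly_mul_comm _ _ _ (sq_nonneg _).not_gt, roots_eq, Multiset.countP_map]
  change #{j | svDesc X k ^ 2 < hX.eigenvalues j} ≤ k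
  by_cases hk : k < d
  · have sq_eq : svDesc X k ^ 2 =
        hX.eigenvalues (Tuple.sort hX.eigenvalues ⟨d - 1 - k, by omega⟩) := by
      rw [svDesc, dif_pos hk,
        Real.sq_sqrt ((posSemidef_conjTranspose_mul_self X).eigenvalues_nonneg _)]
    rw [sq_eq]
    exact (card_filter_sort_lt_le _ _).trans (by simp only; omega)
  · exact (card_le_univ _).trans (by simpa using hk)

end SingularValues

section FrobeniusNorm

variable {m ι : Type*} [Fintype m] [Fintype ι]

lemma frobNorm_conjStarAlgAut_diagonal [DecidableEq m] (U : unitaryGroup m ℝ) (v : m → ℝ) :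
    frobNorm (conjStarAlgAut ℝ _ U (diagonal v)) = ‖toLp 2 v‖ := by
  have star_mul_self (A : Matrix m m ℝ) : Aᵀ * A = star A * A := by
    rw [star_eq_conjTranspose, conjTranspose_eq_transpose_of_trivial]
  rw [frobNorm, star_mul_self, ← map_star, ← map_mul, conjStarAlgAut_apply, trace_mul_comm,
    ← Matrix.mul_assoc, coe_star_mul_self, Matrix.one_mul, ← star_mul_self, diagonal_transpose,
    diagonal_mul_diagonal, trace_diagonal, EuclideanSpace.norm_eq]
  simp [sq]

lemma norm_le_norm_add_norm_of_forall_norm_le {F : Type*} [SeminormedAddCommGroup F]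
    {x y z : PiLp 2 fun _ : ι ↦ F} (h : ∀ i, ‖x i‖ ≤ ‖y i‖ + ‖z i‖) : ‖x‖ ≤ ‖y‖ + ‖z‖ := by
  let norms (w : PiLp 2 fun _ : ι ↦ F) : EuclideanSpace ℝ ι := toLp 2 fun i ↦ ‖w i‖
  have norm_norms (w : PiLp 2 fun _ : ι ↦ F) : ‖norms w‖ = ‖w‖ := by
    simp [norms, PiLp.norm_eq_of_L2]
  calc ‖x‖ ≤ ‖norms y + norms z‖ := by
        rw [PiLp.norm_eq_of_L2, PiLp.norm_eq_of_L2]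
        gcongr with i
        exact (h i).trans (le_abs_self _)
    _ ≤ ‖norms y‖ + ‖norms z‖ := norm_add_le _ _
    _ = ‖y‖ + ‖z‖ := by rw [norm_norms, norm_norms]

lemma norm_toLp_ite_mem [DecidableEq ι] (S : Finset ι) (t : ℝ) :
    ‖toLp 2 fun i ↦ if i ∈ S then 0 else t‖ = √(Fintype.card ι - #S : ℕ) * |t| := by
  rw [EuclideanSpace.norm_eq, ← Real.sqrt_sq_eq_abs, ← Real.sqrt_mul (Nat.cast_nonneg _),
    ← card_compl, ← nsmul_eq_mul, ← sum_const, ← sum_subset (subset_univ Sᶜ) (by simp +contextual)]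
  congr 1
  exact sum_congr rfl fun i hi ↦ by simp [mem_compl.1 hi]

end FrobeniusNorm

section Weights

variable {m n κ : Type*} [Fintype m] [Fintype n] [Fintype κ]

lemma exists_mul_transpose_eq_diagonal [DecidableEq m] {v : m → ℝ} (hv : ∀ i, 0 ≤ v i)
    (hcard : #{i | v i ≠ 0} ≤ Fintype.card κ) :
    ∃ G : Matrix m κ ℝ, G * Gᵀ = diagonal v := by
  classical
  obtain ⟨f⟩ : Nonempty ({i // v i ≠ 0} ↪ κ) :=
    Function.Embedding.nonempty_of_card_le (by rwa [Fintype.card_subtype])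
  let row (i : m) : κ → ℝ := if h : v i ≠ 0 then Pi.single (f ⟨i, h⟩) √(v i) else 0
  have row_dotProduct_self (i : m) : row i ⬝ᵥ row i = v i := by
    by_cases hi : v i = 0 <;> simp [row, hi, Real.mul_self_sqrt (hv i)]
  have row_dotProduct_of_ne {i j : m} (hij : i ≠ j) : row i ⬝ᵥ row j = 0 := by
    by_cases hi : v i = 0 <;> by_cases hj : v j = 0 <;> simp [row, hi, hj, hij]
  refine ⟨of row, ?_⟩
  ext i j
  change row i ⬝ᵥ row j = diagonal v i j
  obtain rfl | hij := eq_or_ne i j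
  · rw [row_dotProduct_self, diagonal_apply_eq]
  · rw [row_dotProduct_of_ne hij, diagonal_apply_ne _ hij]

lemma exists_weight_mul_transpose_eq [DecidableEq m] {P : Matrix m m ℝ} {X : Matrix m n ℝ}
    {U : unitaryGroup m ℝ} {a p v : m → ℝ} (hX : X * Xᵀ = conjStarAlgAut ℝ _ U (diagonal a))
    (hP : P = conjStarAlgAut ℝ _ U (diagonal p)) (hv : ∀ i, 0 ≤ v i)
    (hcard : #{i | v i ≠ 0} ≤ Fintype.card κ) :
    ∃ W : Matrix n κ ℝ, (P * X * W) * (P * X * W)ᵀ =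
      conjStarAlgAut ℝ _ U (diagonal fun i ↦ (p i * a i) ^ 2 * v i) := by
  obtain ⟨G, hG⟩ := exists_mul_transpose_eq_diagonal hv hcard
  refine ⟨Xᵀ * ((U : Matrix m m ℝ) * G), ?_⟩
  calc _ = P * (X * Xᵀ) * conjStarAlgAut ℝ _ U (G * Gᵀ) * star (P * (X * Xᵀ)) := by
        simp only [conjStarAlgAut_apply, star_eq_conjTranspose,
          conjTranspose_eq_transpose_of_trivial, transpose_mul, transpose_transpose,
          Matrix.mul_assoc]
    _ = conjStarAlgAut ℝ _ U
          (diagonal p * diagonal a * diagonal v * star (diagonal p * diagonal a)) := by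
        rw [hG, hX, hP]
        simp only [map_mul, map_star]
    _ = conjStarAlgAut ℝ _ U (diagonal fun i ↦ (p i * a i) ^ 2 * v i) := by
        simp only [diagonal_mul_diagonal, star_eq_conjTranspose, diagonal_conjTranspose,
          star_trivial]
        congr 2 with i
        ring

lemma exists_abs_sub_sq_mul_le {a : ℝ} (ha : 0 ≤ a) (p : ℝ) :
    ∃ v, 0 ≤ v ∧ |p - (p * a) ^ 2 * v| ≤ |p - a| := by
  by_cases h : 0 < p ∧ 0 < a
  · obtain ⟨hp, ha⟩ := h
    refine ⟨p / (p * a) ^ 2, by positivity, ?_⟩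
    rw [mul_div_cancel₀ _ (by positivity)]
    simp
  · have abs_p_le : |p| ≤ |p - a| := by grind
    exact ⟨0, le_rfl, by simpa using abs_p_le⟩

lemma exists_sparse_norm_sub_le {a : m → ℝ} (ha : ∀ i, 0 ≤ a i) (p : m → ℝ) {t : ℝ} (ht : 0 ≤ t)
    {k : ℕ} (hcount : #{i | t < a i} ≤ k) :
    ∃ v : m → ℝ, (∀ i, 0 ≤ v i) ∧ #{i | v i ≠ 0} ≤ k ∧
      ‖toLp 2 fun i ↦ p i - (p i * a i) ^ 2 * v i‖ ≤
        ‖toLp 2 (p - a)‖ + √(Fintype.card m - k : ℕ) * t := by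
  classical
  obtain ⟨S, large_subset, hS⟩ := exists_superset_card_eq
    (le_min hcount (card_le_univ _)) (min_le_right k (Fintype.card m))
  choose w w_nonneg hw using fun i ↦ exists_abs_sub_sq_mul_le (ha i) (p i)
  refine ⟨fun i ↦ if i ∈ S then w i else 0, fun i ↦ ?_, ?_, ?_⟩
  · dsimp only
    split_ifs
    exacts [w_nonneg i, le_rfl]
  · calc #{i | (if i ∈ S then w i else 0) ≠ 0} ≤ #S := card_le_card fun i ↦ by simp +contextual
      _ ≤ k := hS.trans_le (min_le_left _ _)
  · have norm_tail : ‖toLp 2 fun i ↦ if i ∈ S then 0 else t‖ = √(Fintype.card m - k : ℕ) * t := by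
      rw [norm_toLp_ite_mem, abs_of_nonneg ht, hS]
      congr 3
      omega
    rw [← norm_tail]
    refine norm_le_norm_add_norm_of_forall_norm_le fun i ↦ ?_
    by_cases hi : i ∈ S
    · simpa [hi] using hw i
    · have a_le : a i ≤ t := by
        by_contra! hlt
        exact hi (large_subset (by simpa using hlt))
      calc |p i - (p i * a i) ^ 2 * (if i ∈ S then w i else 0)|
        _ = |(p i - a i) + a i| := by simp [hi]
        _ ≤ |p i - a i| + |a i| := abs_add_le _ _
        _ ≤ |p i - a i| + |t| := by gcongr; exact ha i
        _ = _ := by simp [hi]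

theorem exists_weight_frobNorm_sub_le [DecidableEq m] {P : Matrix m m ℝ} (hP : P.IsHermitian)
    {X : Matrix m n ℝ} (hcomm : Commute (X * Xᵀ) (P - X * Xᵀ)) {t : ℝ} (ht : 0 ≤ t)
    (hcount : (X * Xᵀ).charpoly.roots.countP (t < ·) ≤ Fintype.card κ) :
    ∃ W : Matrix n κ ℝ, frobNorm (P - (P * X * W) * (P * X * W)ᵀ) ≤
      frobNorm (P - X * Xᵀ) + √(Fintype.card m - Fintype.card κ : ℕ) * t := by
  have gram_posSemidef : (X * Xᵀ).PosSemidef := by simpa using posSemidef_self_mul_conjTranspose X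
  have commute_P : Commute (X * Xᵀ) P := by simpa using hcomm.add_right (Commute.refl (X * Xᵀ))
  obtain ⟨U, a, p, hX, hPU⟩ :=
    exists_conjStarAlgAut_diagonal_of_commute gram_posSemidef.isHermitian hP commute_P
  have a_nonneg : ∀ i, 0 ≤ a i := by
    rwa [hX, posSemidef_conjStarAlgAut_iff, posSemidef_diagonal_iff] at gram_posSemidef
  have card_large : #{i | t < a i} ≤ Fintype.card κ := by
    rwa [hX, charpoly_conjStarAlgAut, roots_charpoly_diagonal, Multiset.countP_map] at hcount
  obtain ⟨v, v_nonneg, v_card, v_bound⟩ := exists_sparse_norm_sub_le a_nonneg p ht card_large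
  obtain ⟨W, hW⟩ := exists_weight_mul_transpose_eq hX hPU v_nonneg v_card
  refine ⟨W, ?_⟩
  rw [hW, hX, hPU, ← map_sub, ← map_sub, diagonal_sub, diagonal_sub,
    frobNorm_conjStarAlgAut_diagonal, frobNorm_conjStarAlgAut_diagonal]
  exact v_bound

end Weights

theorem sgnn_theorem_2_general {n d k : ℕ} (P : Matrix (Fin n) (Fin n) ℝ) (hP : P.IsHermitian)
    (X : Matrix (Fin n) (Fin d) ℝ)
    (hcomm : (X * Xᵀ) * (P - X * Xᵀ) = (P - X * Xᵀ) * (X * Xᵀ)) :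
    ∃ W : Matrix (Fin d) (Fin k) ℝ,
      frobNorm (P - (P * X * W) * (P * X * W)ᵀ)
        ≤ frobNorm (P - X * Xᵀ) + Real.sqrt (n - k : ℕ) * (svDesc X k) ^ 2 := by
  simpa using exists_weight_frobNorm_sub_le (κ := Fin k) hP hcomm (sq_nonneg (svDesc X k))
    (by simpa using countP_sq_svDesc_lt_roots_charpoly_le X k)

/-- Theorem 2: if P is symmetric PSD, rank(X) > k, and X Xᵀ commutes with
E = P − X Xᵀ (Assumption 1 fails), then there exists W such that H = P X W
satisfies ‖P − H Hᵀ‖_F ≤ ε + √(n−k)·σ*², where ε = ‖E‖_F and σ* is the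
(k+1)-th largest singular value of X. -/
theorem sgnn_theorem_2
    {n d k : ℕ}
    (P : Matrix (Fin n) (Fin n) ℝ) (hP : P.PosSemidef)
    (X : Matrix (Fin n) (Fin d) ℝ)
    (hrank : k < X.rank)
    (hcomm : (X * Xᵀ) * (P - X * Xᵀ) = (P - X * Xᵀ) * (X * Xᵀ)) :
    ∃ W : Matrix (Fin d) (Fin k) ℝ,
      frobNorm (P - (P * X * W) * (P * X * W)ᵀ)
        ≤ frobNorm (P - X * Xᵀ) + Real.sqrt (n - k : ℕ) * (svDesc X k) ^ 2 :=
  sgnn_theorem_2_general P hP.isHermitian X hcomm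
end

section
/- Let P ∈ R^{n×n} be symmetric positive semidefinite and X ∈ R^{n×d} with rank(X) = r ≤ k, E = P − X X^T and ε = ‖E‖_F. Assume X X^T and E commute (equivalently, share a common orthonormal eigenbasis). Then there exists W ∈ R^{d×k} such that, with H = P X W, ‖P − H H^T‖_F ≤ ε. -/
open Matrix

/-!
Let `A = X Xᵀ`, and let `Q` be the orthogonal projection onto the column space of `P`. Since `A`
commutes with `P`, it preserves this column space and, being symmetric, commutes with `Q`. Writing
`Q = P Z` gives `Q A = A Q = P X Xᵀ Z`, so every matrix `Q A L` has the form `P X W`. As `A` has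
rank at most `k`, one can choose `L` with `k` columns such that `(A L) (A L)ᵀ = A`; then
`H = Q A L` satisfies `H Hᵀ = Q A Q = Q A`, whence `P - H Hᵀ = Q (P - A)`, and multiplication by
an orthogonal projection does not increase the Frobenius norm.
-/

section Frobenius

variable {m n : Type*} [Fintype m] [Fintype n]

theorem trace_transpose_mul_self_nonneg (M : Matrix m n ℝ) : 0 ≤ (Mᵀ * M).trace := by
  simpa only [conjTranspose_eq_transpose_of_trivial] using
    (posSemidef_conjTranspose_mul_self M).trace_nonneg

theorem frobNorm_mul_le_of_isStarProjection {Q : Matrix m m ℝ} (hQ : IsStarProjection Q)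
    (M : Matrix m n ℝ) : frobNorm (Q * M) ≤ frobNorm M := by
  classical
  have gram_mul {R : Matrix m m ℝ} (hR : IsStarProjection R) :
      (R * M)ᵀ * (R * M) = Mᵀ * R * M := by
    have hRt : Rᵀ = R := hR.isSelfAdjoint
    rw [transpose_mul, hRt, Matrix.mul_assoc, ← Matrix.mul_assoc R, hR.isIdempotentElem.eq,
      Matrix.mul_assoc]
  have pythagoras : Mᵀ * M = (Q * M)ᵀ * (Q * M) + ((1 - Q) * M)ᵀ * ((1 - Q) * M) := by
    rw [gram_mul hQ, gram_mul hQ.one_sub, ← Matrix.add_mul, ← Matrix.mul_add,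
      add_sub_cancel, Matrix.mul_one]
  apply Real.sqrt_le_sqrt
  rw [pythagoras, trace_add]
  exact le_add_of_nonneg_right (trace_transpose_mul_self_nonneg _)

end Frobenius

theorem exists_mul_conjTranspose_eq_one {R κ : Type*} [Semiring R] [StarRing R] [Fintype κ]
    {r : ℕ} (hr : r ≤ Fintype.card κ) :
    ∃ J : Matrix (Fin r) κ R, J * Jᴴ = 1 := by
  classical
  obtain ⟨e⟩ : Nonempty (Fin r ↪ κ) :=
    Function.Embedding.nonempty_of_card_le (by rwa [Fintype.card_fin])
  refine ⟨(1 : Matrix κ κ R).submatrix e id, ?_⟩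
  rw [conjTranspose_submatrix, ← submatrix_mul _ _ _ _ _ Function.bijective_id,
    conjTranspose_one, Matrix.one_mul, submatrix_one e e.injective]

section ColumnSpace

variable {𝕜 m n κ : Type*} [RCLike 𝕜] [Fintype m] [Fintype n] [Fintype κ]

theorem exists_orthonormal_columns_basis (M : Matrix m n 𝕜) :
    ∃ (U : Matrix m (Fin M.rank) 𝕜) (V : Matrix n (Fin M.rank) 𝕜),
      Uᴴ * U = 1 ∧ U * Uᴴ * M = M ∧ U = M * V := by
  classical
  let S : Submodule 𝕜 (EuclideanSpace 𝕜 m) := LinearMap.range (toLpLin 2 2 M)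
  have finrank_S : Module.finrank 𝕜 S = M.rank := by
    rw [rank_eq_finrank_range_toLin M (PiLp.basisFun 2 𝕜 m) (PiLp.basisFun 2 𝕜 n),
      ← toLpLin_eq_toLin]
  let b : OrthonormalBasis (Fin M.rank) 𝕜 S :=
    (stdOrthonormalBasis 𝕜 S).reindex (finCongr finrank_S)
  have col_mem (j : n) : WithLp.toLp 2 (M.col j) ∈ S :=
    ⟨WithLp.toLp 2 (Pi.single j 1), by rw [toLpLin_toLp, toLin'_apply, mulVec_single_one]⟩
  choose v hv using fun i => (b i).2
  let U : Matrix m (Fin M.rank) 𝕜 := of fun a i => (b i : EuclideanSpace 𝕜 m) a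
  refine ⟨U, of fun j i => v i j, ?_, ?_, ?_⟩
  · ext i j
    rw [one_apply, ← orthonormal_iff_ite.mp b.orthonormal i j, Submodule.coe_inner,
      PiLp.inner_apply]
    simp [U, Matrix.mul_apply, RCLike.inner_apply, mul_comm]
  · ext a j
    have expansion := congrArg (fun x : S => (x : EuclideanSpace 𝕜 m) a)
      (b.sum_repr' ⟨_, col_mem j⟩)
    rw [Matrix.mul_assoc]
    simpa [U, Matrix.mul_apply, PiLp.inner_apply, RCLike.inner_apply, mul_comm] using expansion
  · ext a i
    exact (congrArg (fun x : EuclideanSpace 𝕜 m => x a) (hv i)).symm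

theorem exists_isStarProjection_mul_eq_self (M : Matrix m n 𝕜) :
    ∃ (Q : Matrix m m 𝕜) (Z : Matrix n m 𝕜), IsStarProjection Q ∧ Q * M = M ∧ Q = M * Z := by
  obtain ⟨U, V, hU, hUM, hUV⟩ := exists_orthonormal_columns_basis M
  refine ⟨U * Uᴴ, V * Uᴴ, ⟨?_, isHermitian_mul_conjTranspose_self U⟩, hUM, ?_⟩
  · rw [IsIdempotentElem, Matrix.mul_assoc, ← Matrix.mul_assoc Uᴴ, hU, Matrix.one_mul]
  · rw [← Matrix.mul_assoc, ← hUV]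

open scoped ComplexOrder in
theorem exists_gram_mul_factor_of_rank_le (X : Matrix m n 𝕜) (hX : X.rank ≤ Fintype.card κ) :
    ∃ L : Matrix m κ 𝕜, (X * Xᴴ * L) * (X * Xᴴ * L)ᴴ = X * Xᴴ := by
  obtain ⟨U, V, -, hUX, hUV⟩ := exists_orthonormal_columns_basis Xᴴ
  obtain ⟨J, hJ⟩ := exists_mul_conjTranspose_eq_one (R := 𝕜) (κ := κ)
    (X.rank_conjTranspose.trans_le hX)
  refine ⟨V * J, ?_⟩
  have gram_mul : X * Xᴴ * (V * J) = X * U * J := by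
    rw [Matrix.mul_assoc X, ← Matrix.mul_assoc Xᴴ, ← hUV, Matrix.mul_assoc]
  calc X * Xᴴ * (V * J) * (X * Xᴴ * (V * J))ᴴ
      = X * (U * (J * Jᴴ) * (Uᴴ * Xᴴ)) := by
        simp only [gram_mul, conjTranspose_mul, Matrix.mul_assoc]
    _ = X * Xᴴ := by rw [hJ, Matrix.mul_one, ← Matrix.mul_assoc U, hUX]

end ColumnSpace

theorem commute_of_isSelfAdjoint_of_mul_eq {S : Type*} [Semigroup S] [StarMul S] {a p q z : S}
    (ha : IsSelfAdjoint a) (hq : IsSelfAdjoint q) (hqp : q * p = p) (hqz : q = p * z)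
    (hap : Commute a p) : Commute a q := by
  have compression_eq : q * a * q = a * q :=
    calc q * a * q = q * (a * p) * z := by rw [hqz]; simp only [mul_assoc]
      _ = q * p * a * z := by rw [hap.eq, mul_assoc q p a]
      _ = a * p * z := by rw [hqp, ← hap.eq]
      _ = a * q := by rw [mul_assoc, ← hqz]
  have star_compression_eq : q * a * q = q * a := by
    simpa only [star_mul, ha.star_eq, hq.star_eq, ← mul_assoc] using congrArg star compression_eq
  exact compression_eq.symm.trans star_compression_eq

theorem exists_isStarProjection_mul_gram_eq {𝕜 n d κ : Type*} [RCLike 𝕜] [Fintype n] [Fintype d]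
    [Fintype κ] (P : Matrix n n 𝕜) (X : Matrix n d 𝕜) (hrank : X.rank ≤ Fintype.card κ)
    (hcomm : Commute (X * Xᴴ) P) :
    ∃ (Q : Matrix n n 𝕜) (W : Matrix d κ 𝕜), IsStarProjection Q ∧ Q * P = P ∧
      (P * X * W) * (P * X * W)ᴴ = Q * (X * Xᴴ) := by
  obtain ⟨Q, Z, hQ, hQP, hQZ⟩ := exists_isStarProjection_mul_eq_self P
  obtain ⟨L, hL⟩ := exists_gram_mul_factor_of_rank_le (κ := κ) X hrank
  have hQA : Commute (X * Xᴴ) Q := commute_of_isSelfAdjoint_of_mul_eq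
    (isHermitian_mul_conjTranspose_self X) hQ.isSelfAdjoint hQP hQZ hcomm
  have hQt : Qᴴ = Q := hQ.isSelfAdjoint
  refine ⟨Q, Xᴴ * Z * L, hQ, hQP, ?_⟩
  have factor_eq : P * X * (Xᴴ * Z * L) = Q * (X * Xᴴ * L) :=
    calc P * X * (Xᴴ * Z * L) = P * (X * Xᴴ) * Z * L := by simp only [Matrix.mul_assoc]
      _ = X * Xᴴ * (P * Z) * L := by rw [← hcomm.eq, Matrix.mul_assoc _ P]
      _ = Q * (X * Xᴴ * L) := by rw [← hQZ, hQA.eq, Matrix.mul_assoc]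
  calc P * X * (Xᴴ * Z * L) * (P * X * (Xᴴ * Z * L))ᴴ
      = Q * ((X * Xᴴ * L) * (X * Xᴴ * L)ᴴ) * Q := by
        rw [factor_eq, conjTranspose_mul Q, hQt]
        simp only [Matrix.mul_assoc]
    _ = Q * (X * Xᴴ) := by
        rw [hL, Matrix.mul_assoc, hQA.eq, ← Matrix.mul_assoc, hQ.isIdempotentElem.eq]

theorem sgnn_theorem_2_low_rank_general {n d κ : Type*} [Fintype n] [Fintype d] [Fintype κ]
    (P : Matrix n n ℝ) (X : Matrix n d ℝ) (hrank : X.rank ≤ Fintype.card κ)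
    (hcomm : Commute (X * Xᵀ) (P - X * Xᵀ)) :
    ∃ W : Matrix d κ ℝ,
      frobNorm (P - (P * X * W) * (P * X * W)ᵀ) ≤ frobNorm (P - X * Xᵀ) := by
  have hAP : Commute (X * Xᵀ) P := by
    simpa only [sub_add_cancel] using hcomm.add_right (Commute.refl (X * Xᵀ))
  obtain ⟨Q, W, hQ, hQP, hW⟩ := exists_isStarProjection_mul_gram_eq P X hrank hAP
  simp only [conjTranspose_eq_transpose_of_trivial] at hW
  have residual_eq : P - (P * X * W) * (P * X * W)ᵀ = Q * (P - X * Xᵀ) := by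
    rw [hW, Matrix.mul_sub, hQP]
  exact ⟨W, residual_eq ▸ frobNorm_mul_le_of_isStarProjection hQ _⟩

/-- If P is symmetric PSD, rank(X) = r ≤ k, and X Xᵀ commutes with
E = P − X Xᵀ, then there exists W such that H = P X W satisfies
‖P − H Hᵀ‖_F ≤ ε = ‖E‖_F. -/
theorem sgnn_theorem_2_low_rank
    {n d k r : ℕ}
    (P : Matrix (Fin n) (Fin n) ℝ) (hP : P.PosSemidef)
    (X : Matrix (Fin n) (Fin d) ℝ)
    (hrank : X.rank = r) (hr : r ≤ k)
    (hcomm : (X * Xᵀ) * (P - X * Xᵀ) = (P - X * Xᵀ) * (X * Xᵀ)) :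
    ∃ W : Matrix (Fin d) (Fin k) ℝ,
      frobNorm (P - (P * X * W) * (P * X * W)ᵀ)
        ≤ frobNorm (P - X * Xᵀ) :=
  sgnn_theorem_2_low_rank_general P X (by rwa [Fintype.card_fin, hrank]) hcomm
end
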